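/- There is an absolute constant A > 0 such that for every positive integer k and every real R ≥ 1, one has |Σ_{n ≤ R, gcd(n,k) = 1} μ²(n)/φ(n) − (φ(k)/k)·(log R + c + v(k))| ≤ A·w(k)/√R. -/

import Mathlib

open Finset ArithmeticFunction

/-- The Generalized Riemann Hypothesis for Dirichlet L-functions: every zero of a
Dirichlet L-function in the critical strip lies on the critical line. -/
def GRH : Prop :=
  ∀ (N : ℕ) [NeZero N] (χ : DirichletCharacter ℂ N) (s : ℂ),
    DirichletCharacter.LFunction χ s = 0 → 0 < s.re → s.re < 1 → s.re = 1 / 2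

/-- `ψ(x; q, a) = ∑_{n ≤ x, n ≡ a (mod q)} Λ(n)`. -/
noncomputable def psi (x : ℝ) (q a : ℕ) : ℝ :=
  ∑ n ∈ (Finset.Icc 1 ⌊x⌋₊).filter (fun n : ℕ => (n : ZMod q) = (a : ZMod q)),
    ArithmeticFunction.vonMangoldt n

/-- `I(x,h,q,a) = ∫_x^{2x} (ψ(y+h;q,a) − ψ(y;q,a) − h/φ(q))² dy`. -/
noncomputable def momentI (x h : ℝ) (q a : ℕ) : ℝ :=
  ∫ y in x..(2 * x), (psi (y + h) q a - psi y q a - h / (q.totient : ℝ)) ^ 2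

/-- `λ_R(n) = ∑_{r ≤ R} (μ²(r)/φ(r)) ∑_{d ∣ (r,n)} d·μ(d)`. -/
noncomputable def lamR (R : ℝ) (n : ℕ) : ℝ :=
  ∑ r ∈ Finset.Icc 1 ⌊R⌋₊,
    ((ArithmeticFunction.moebius r : ℝ) ^ 2 / (r.totient : ℝ)) *
      ∑ d ∈ (Nat.gcd r n).divisors, (d : ℝ) * (ArithmeticFunction.moebius d : ℝ)

/-- `c = γ + ∑_p (log p)/(p(p−1))`. -/
noncomputable def cGY : ℝ :=
  Real.eulerMascheroniConstant +
    ∑' p : Nat.Primes, Real.log (p : ℕ) / (((p : ℕ) : ℝ) * (((p : ℕ) : ℝ) - 1))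

/-- `v(k) = ∑_{p ∣ k} (log p)/p`. -/
noncomputable def vGY (k : ℕ) : ℝ := ∑ p ∈ k.primeFactors, Real.log p / (p : ℝ)

/-- `w(k) = ∏_{p ∣ k} (1 + 1/√p)`. -/
noncomputable def wGY (k : ℕ) : ℝ := ∏ p ∈ k.primeFactors, (1 + 1 / Real.sqrt p)

/-- `g(k) = ∏_{p ∣ k} (1 + p/(p−1))`. -/
noncomputable def gGY (k : ℕ) : ℝ := ∏ p ∈ k.primeFactors, (1 + (p : ℝ) / ((p : ℝ) - 1))

/-- The twin prime constant `C = ∏_{p > 2} (1 − 1/(p−1)²)`. -/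
noncomputable def twinC : ℝ :=
  ∏' p : Nat.Primes, (if 2 < (p : ℕ) then 1 - 1 / (((p : ℕ) : ℝ) - 1) ^ 2 else 1)

/-- The singular series `𝔖(k)`. -/
noncomputable def singSeries (k : ℕ) : ℝ :=
  if 2 ∣ k ∧ k ≠ 0 then
    2 * twinC * ∏ p ∈ k.primeFactors.filter (fun p => 2 < p), ((p : ℝ) - 1) / ((p : ℝ) - 2)
  else 0

/-- `f(n,x,h)`, the length of the interval `[x,2x] ∩ [n−h,n)`. -/
noncomputable def flen (n : ℕ) (x h : ℝ) : ℝ :=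
  if x ≤ n ∧ (n : ℝ) < x + h then (n : ℝ) - x
  else if x + h ≤ n ∧ (n : ℝ) ≤ 2 * x then h
  else if 2 * x < n ∧ (n : ℝ) ≤ 2 * x + h then 2 * x - n + h
  else 0

/-! For squarefree `n` one has `n / φ(n) = ∑_{a ∣ n} 1 / φ(a)`, so `μ²(n) / φ(n)` on the integers
coprime to `k` is a convolution with `μ²(n) / n`, which in turn comes from `1 / n` through
`μ²(n) = ∑_{d² ∣ n} μ(d)` and a sieve over the divisors of `k`. Convolutions preserve expansions
`α log x + β + O(W / √x)` of partial sums, and the sieve contributes the factor `w(k)` to `W`. The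
constants need not be followed through the convolutions: `α / s + β` is the polar part at `s = 0` of
the Dirichlet series `∑ μ²(n) φ(n)⁻¹ n⁻ˢ`, which equals `ζ(1 + s) φ(k) / k` times an infinite
product whose derivative at `s = 0` is `∑_p log p / (p (p - 1)) + v(k)`. -/

open Filter Topology

/-! ### Logarithmic expansions of partial sums -/

/-- The partial sums of `u` satisfy `∑_{n ≤ x} u n = α log x + β + O(W / √x)`. The bound is
required for all `x > 0`: for `x < 1` the sum is empty, so it also bounds `α` and `β` by `W`. -/
def HasLogExpansion (u : ℕ → ℝ) (α β W : ℝ) : Prop :=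
  ∀ x : ℝ, 0 < x → |∑ n ∈ Icc 1 ⌊x⌋₊, u n - α * Real.log x - β| ≤ W / √x

theorem log_le_two_mul_sqrt {x : ℝ} (hx : 0 ≤ x) : Real.log x ≤ 2 * √x := by
  have := Real.log_le_rpow_div hx one_half_pos
  rw [← Real.sqrt_eq_rpow] at this
  linarith

theorem sum_Icc_filter_dvd (x : ℝ) {d : ℕ} (hd : 0 < d) (g : ℕ → ℝ) :
    ∑ n ∈ Icc 1 ⌊x⌋₊ with d ∣ n, g n = ∑ m ∈ Icc 1 ⌊x / d⌋₊, g (d * m) := by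
  symm
  refine sum_nbij' (d * ·) (· / d) (fun m hm => ?_) (fun n hn => ?_)
    (fun m _ => Nat.mul_div_cancel_left m hd)
    (fun n hn => Nat.mul_div_cancel' (mem_filter.mp hn).2) (fun _ _ => rfl)
  · rw [mem_Icc, Nat.floor_div_natCast, Nat.le_div_iff_mul_le hd, mul_comm] at hm
    exact mem_filter.mpr ⟨mem_Icc.mpr ⟨Nat.mul_pos hd hm.1, hm.2⟩, dvd_mul_right d m⟩
  · obtain ⟨hn, hdn⟩ := mem_filter.mp hn
    rw [mem_Icc] at hn
    rw [mem_Icc, Nat.floor_div_natCast]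
    exact ⟨Nat.div_pos (Nat.le_of_dvd hn.1 hdn) hd, Nat.div_le_div_right hn.2⟩

theorem sum_Icc_sum_divisors (x : ℝ) (h : ℕ → ℕ → ℝ) :
    ∑ n ∈ Icc 1 ⌊x⌋₊, ∑ a ∈ n.divisors, h a n =
      ∑ a ∈ Icc 1 ⌊x⌋₊, ∑ n ∈ Icc 1 ⌊x⌋₊ with a ∣ n, h a n := by
  refine sum_comm' fun n a => ?_
  simp only [mem_Icc, Nat.mem_divisors, mem_filter]
  refine ⟨fun ⟨hn, ha, _⟩ => ⟨⟨hn, ha⟩, Nat.pos_of_dvd_of_pos ha hn.1,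
    (Nat.le_of_dvd hn.1 ha).trans hn.2⟩, fun ⟨⟨hn, ha⟩, _⟩ => ⟨hn, ha, by lia⟩⟩

-- The partial sum of `g a` up to `x / a` vanishes for `a > x`, which extends the sum over `a ≤ x`
-- to a series over all `a` that can be compared termwise with the series for the coefficients.
theorem hasSum_mul_sum_floor_div {c : ℕ → ℝ} {g : ℕ → ℕ → ℝ} (hc : c 0 = 0) {x : ℝ} (hx : 0 < x) :
    HasSum (fun a : ℕ => c a * ∑ m ∈ Icc 1 ⌊x / a⌋₊, g a m)
      (∑ n ∈ Icc 1 ⌊x⌋₊, ∑ a ∈ n.divisors, c a * g a (n / a)) := by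
  have hswap : ∑ n ∈ Icc 1 ⌊x⌋₊, ∑ a ∈ n.divisors, c a * g a (n / a) =
      ∑ a ∈ Icc 1 ⌊x⌋₊, c a * ∑ m ∈ Icc 1 ⌊x / a⌋₊, g a m := by
    rw [sum_Icc_sum_divisors]
    refine sum_congr rfl fun a ha => ?_
    have ha : 0 < a := (mem_Icc.mp ha).1
    simp_rw [sum_Icc_filter_dvd x ha, Nat.mul_div_cancel_left _ ha, mul_sum]
  rw [hswap]
  refine hasSum_sum_of_ne_finset_zero fun a ha => ?_
  rcases a.eq_zero_or_pos with rfl | ha0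
  · rw [hc, zero_mul]
  have hxa : x < a := (Nat.floor_lt hx.le).mp (by simpa [Nat.one_le_iff_ne_zero, ha0.ne'] using ha)
  rw [Nat.floor_eq_zero.mpr ((div_lt_one (hx.trans hxa)).mpr hxa), Icc_eq_empty (by lia), sum_empty,
    mul_zero]

namespace HasLogExpansion

theorem mono {u : ℕ → ℝ} {α β W W' : ℝ} (hu : HasLogExpansion u α β W) (hW : W ≤ W') :
    HasLogExpansion u α β W' :=
  fun x hx => (hu x hx).trans (by gcongr)

theorem congr {u v : ℕ → ℝ} {α β W : ℝ} (hu : HasLogExpansion u α β W)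
    (huv : ∀ n, 0 < n → u n = v n) : HasLogExpansion v α β W := fun x hx => by
  rw [← sum_congr rfl fun n hn => huv n (mem_Icc.mp hn).1]
  exact hu x hx

-- The sum is empty for `x = 1/4` and `x = 1/16`, and these two values determine `α` and `β`.
theorem abs_coeff_le {u : ℕ → ℝ} {α β W : ℝ} (hu : HasLogExpansion u α β W) :
    |α| ≤ 8 * W ∧ |β| ≤ 8 * W := by
  have h_four := hu (1 / 4) (by norm_num)
  have h_sixteen := hu (1 / 16) (by norm_num)
  have sqrt_four : √(1 / 4 : ℝ) = 1 / 2 := by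
    rw [Real.sqrt_eq_iff_mul_self_eq] <;> norm_num
  have sqrt_sixteen : √(1 / 16 : ℝ) = 1 / 4 := by
    rw [Real.sqrt_eq_iff_mul_self_eq] <;> norm_num
  have log_four : Real.log (1 / 4) = -(2 * Real.log 2) := by
    rw [one_div, Real.log_inv, show (4 : ℝ) = 2 ^ 2 by norm_num, Real.log_pow, Nat.cast_two]
  have log_sixteen : Real.log (1 / 16) = -(4 * Real.log 2) := by
    rw [one_div, Real.log_inv, show (16 : ℝ) = 2 ^ 4 by norm_num, Real.log_pow, Nat.cast_ofNat]
  have floor_four : ⌊(1 / 4 : ℝ)⌋₊ = 0 := Nat.floor_eq_zero.mpr (by norm_num)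
  have floor_sixteen : ⌊(1 / 16 : ℝ)⌋₊ = 0 := Nat.floor_eq_zero.mpr (by norm_num)
  simp only [floor_four, floor_sixteen, sqrt_four, sqrt_sixteen, log_four, log_sixteen,
    show Icc 1 0 = (∅ : Finset ℕ) from rfl, sum_empty, abs_le] at h_four h_sixteen
  have log_gt := Real.log_two_gt_d9
  have log_lt := Real.log_two_lt_d9
  have hαlog : |α| * Real.log 2 ≤ 3 * W := by
    rw [← abs_of_pos (show 0 < Real.log 2 by linarith), ← abs_mul, abs_le]
    constructor <;> linarith
  have hα : |α| ≤ 8 * W := by nlinarith [abs_nonneg α]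
  have := abs_le.mp hα
  exact ⟨hα, abs_le.mpr (by constructor <;> linarith)⟩

theorem abs_sub_mul_log_le {u : ℕ → ℝ} {α β W : ℝ} (hu : HasLogExpansion u α β W) {a : ℕ}
    (ha : 0 < a) : |β - α * Real.log a| ≤ 24 * (W * √a) := by
  obtain ⟨hα, hβ⟩ := hu.abs_coeff_le
  have hsqrt : 1 ≤ √(a : ℝ) := Real.one_le_sqrt.mpr (by exact_mod_cast ha)
  have hlog : |α * Real.log a| ≤ 8 * W * (2 * √a) := by
    rw [abs_mul, abs_of_nonneg (Real.log_natCast_nonneg a)]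
    gcongr
    · linarith [abs_nonneg α]
    · exact log_le_two_mul_sqrt a.cast_nonneg
  refine (abs_sub _ _).trans ?_
  nlinarith [abs_nonneg β]

variable {c α β W : ℕ → ℝ} {g : ℕ → ℕ → ℝ}

theorem convolution (hc : c 0 = 0) (hg : ∀ a, 0 < a → HasLogExpansion (g a) (α a) (β a) (W a))
    (hW : Summable fun a : ℕ => |c a| * W a * √a) :
    HasLogExpansion (fun n => ∑ a ∈ n.divisors, c a * g a (n / a)) (∑' a, c a * α a)
      (∑' a, c a * (β a - α a * Real.log a)) (∑' a : ℕ, |c a| * W a * √a) := by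
  have summable_α : Summable fun a => c a * α a := by
    refine .of_norm_bounded (hW.mul_left 8) fun a => ?_
    rcases a.eq_zero_or_pos with rfl | ha
    · simp [hc]
    have hα := (hg a ha).abs_coeff_le.1
    have hsqrt : 1 ≤ √(a : ℝ) := Real.one_le_sqrt.mpr (by exact_mod_cast ha)
    rw [norm_mul, Real.norm_eq_abs, Real.norm_eq_abs]
    calc |c a| * |α a| ≤ |c a| * (8 * W a * √a) := by
          gcongr; exact hα.trans (le_mul_of_one_le_right ((abs_nonneg _).trans hα) hsqrt)
      _ = 8 * (|c a| * W a * √a) := by ring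
  have summable_β : Summable fun a => c a * (β a - α a * Real.log a) := by
    refine .of_norm_bounded (hW.mul_left 24) fun a => ?_
    rcases a.eq_zero_or_pos with rfl | ha
    · simp [hc]
    rw [norm_mul, Real.norm_eq_abs, Real.norm_eq_abs]
    calc |c a| * |β a - α a * Real.log a| ≤ |c a| * (24 * (W a * √a)) := by
          gcongr; exact (hg a ha).abs_sub_mul_log_le ha
      _ = 24 * (|c a| * W a * √a) := by ring
  intro x hx
  have hsum := ((hasSum_mul_sum_floor_div (g := g) hc hx).sub
    (summable_α.hasSum.mul_right (Real.log x))).sub summable_β.hasSum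
  rw [← hsum.tsum_eq, ← Real.norm_eq_abs]
  refine tsum_of_norm_bounded (hW.hasSum.div_const √x) fun a => ?_
  rcases a.eq_zero_or_pos with rfl | ha
  · simp [hc]
  have ha' : (0 : ℝ) < a := by exact_mod_cast ha
  calc ‖c a * ∑ m ∈ Icc 1 ⌊x / a⌋₊, g a m - c a * α a * Real.log x
        - c a * (β a - α a * Real.log a)‖
      = |c a| * |∑ m ∈ Icc 1 ⌊x / a⌋₊, g a m - α a * Real.log (x / a) - β a| := by
        rw [Real.norm_eq_abs, ← abs_mul, Real.log_div hx.ne' ha'.ne']; ring_nf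
    _ ≤ |c a| * (W a / √(x / a)) := by gcongr; exact hg a ha _ (by positivity)
    _ = |c a| * W a * √a / √x := by rw [Real.sqrt_div hx.le]; field_simp

end HasLogExpansion

/-! ### Harmonic sums over multiples of squares -/

theorem abs_harmonic_floor_sub_log_le {x : ℝ} (hx : 1 ≤ x) :
    |(harmonic ⌊x⌋₊ : ℝ) - Real.log x - Real.eulerMascheroniConstant| ≤ 2 / x := by
  have hx0 : 0 < x := by linarith
  have hfloor : 1 ≤ ⌊x⌋₊ := (Nat.one_le_floor_iff x).mpr hx
  have hn1 : (1 : ℝ) ≤ ⌊x⌋₊ := by exact_mod_cast hfloor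
  have floor_le : (⌊x⌋₊ : ℝ) ≤ x := Nat.floor_le hx0.le
  have lt_floor : x < ⌊x⌋₊ + 1 := Nat.lt_floor_add_one x
  have lower := Real.eulerMascheroniSeq_lt_eulerMascheroniConstant ⌊x⌋₊
  have upper := Real.eulerMascheroniConstant_lt_eulerMascheroniSeq' ⌊x⌋₊
  rw [Real.eulerMascheroniSeq] at lower
  rw [Real.eulerMascheroniSeq', if_neg (by lia)] at upper
  have log_succ : Real.log (⌊x⌋₊ + 1) - Real.log x ≤ 2 / x := by
    rw [← Real.log_div (by positivity) hx0.ne']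
    refine (Real.log_le_sub_one_of_pos (by positivity)).trans ?_
    rw [div_sub_one hx0.ne']
    gcongr
    linarith
  have log_floor : Real.log x - Real.log ⌊x⌋₊ ≤ 2 / x := by
    rw [← Real.log_div hx0.ne' (by positivity)]
    refine (Real.log_le_sub_one_of_pos (by positivity)).trans ?_
    rw [div_sub_one (by positivity), div_le_div_iff₀ (by positivity) hx0]
    nlinarith
  rw [abs_le]
  constructor <;> linarith

theorem abs_harmonic_floor_sub_log_le_of_lt_one {x : ℝ} (hx0 : 0 < x) (hx : x < 1) :
    |(harmonic ⌊x⌋₊ : ℝ) - Real.log x - Real.eulerMascheroniConstant| ≤ 1 - Real.log x := by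
  rw [Nat.floor_eq_zero.mpr hx, harmonic_zero, Rat.cast_zero]
  have := Real.one_half_lt_eulerMascheroniConstant
  have := Real.eulerMascheroniConstant_lt_two_thirds
  have := Real.log_neg hx0 hx
  rw [abs_le]
  constructor <;> linarith

-- Interpolates between the bounds `2 t ^ 2` for `t ≤ 1` and `O(log t)` for `t ≥ 1`.
theorem abs_harmonic_floor_inv_sq_le {t : ℝ} (ht : 0 < t) :
    |(harmonic ⌊1 / t ^ 2⌋₊ : ℝ) - Real.log (1 / t ^ 2) - Real.eulerMascheroniConstant| ≤
      16 * t ^ 2 / ((1 + t) * √(1 + t)) := by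
  rcases le_or_gt t 1 with h | h
  · have hx : 1 ≤ 1 / t ^ 2 := one_le_one_div (by positivity) (pow_le_one₀ ht.le h)
    have hsqrt : √(1 + t) ≤ 2 := (Real.sqrt_le_left (by norm_num)).mpr (by linarith)
    refine (abs_harmonic_floor_sub_log_le hx).trans ?_
    rw [div_div_eq_mul_div, div_one, le_div_iff₀ (by positivity)]
    have : (1 + t) * √(1 + t) ≤ 2 * 2 := by gcongr; linarith
    nlinarith [sq_nonneg t]
  · have hx : 1 / t ^ 2 < 1 := (div_lt_one (by positivity)).mpr (one_lt_pow₀ h two_ne_zero)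
    have hsqrt : √(1 + t) ≤ 2 * √t :=
      (Real.sqrt_le_left (by positivity)).mpr (by rw [mul_pow, Real.sq_sqrt ht.le]; linarith)
    have hlog : -Real.log (1 / t ^ 2) ≤ 4 * (√t - 1) := by
      have := Real.log_le_sub_one_of_pos (Real.sqrt_pos.mpr ht)
      rw [Real.log_sqrt ht.le] at this
      rw [one_div, Real.log_inv, Real.log_pow, Nat.cast_two]
      linarith
    refine (abs_harmonic_floor_sub_log_le_of_lt_one (by positivity) hx).trans ?_
    calc 1 - Real.log (1 / t ^ 2) ≤ 4 * √t := by linarith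
      _ = 16 * t ^ 2 / ((2 * t) * (2 * √t)) := by
        rw [eq_div_iff (by positivity)]
        linear_combination 16 * t * Real.mul_self_sqrt ht.le
      _ ≤ 16 * t ^ 2 / ((1 + t) * √(1 + t)) := by gcongr; linarith

theorem one_div_mul_sqrt_le_sub {x : ℝ} (hx : 0 < x) :
    1 / ((x + 1) * √(x + 1)) ≤ 2 / √x - 2 / √(x + 1) := by
  have hlt : √x < √(x + 1) := Real.sqrt_lt_sqrt hx.le (by linarith)
  have hpos : 0 < √x := Real.sqrt_pos.mpr hx
  have hx2 := Real.mul_self_sqrt hx.le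
  have hy2 := Real.mul_self_sqrt (show 0 ≤ x + 1 by linarith)
  have hsub : 2 / √x - 2 / √(x + 1) = 2 / (√x * √(x + 1) * (√x + √(x + 1))) := by
    rw [div_sub_div _ _ hpos.ne' (hpos.trans hlt).ne',
      div_eq_div_iff (by positivity) (by positivity)]
    linear_combination 2 * √x * √(x + 1) * (hy2 - hx2)
  rw [hsub, div_le_div_iff₀ (by positivity) (by positivity)]
  have : √x * √(x + 1) * (√x + √(x + 1)) ≤
      √(x + 1) * √(x + 1) * (√(x + 1) + √(x + 1)) := by gcongr
  rw [hy2] at this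
  linarith

theorem abs_le_of_hasSum_of_abs_succ_le_sub {u b : ℕ → ℝ} {S : ℝ} (hu : HasSum u S) (hu0 : u 0 = 0)
    (hb : ∀ n, 0 ≤ b n) (hub : ∀ n, |u (n + 1)| ≤ b n - b (n + 1)) : |S| ≤ b 0 := by
  have hu' : HasSum (fun n => u (n + 1)) S := by
    simpa [hu0] using (hasSum_nat_add_iff' 1).mpr hu
  refine le_of_tendsto' hu'.tendsto_sum_nat.abs fun N => ?_
  calc |∑ n ∈ range N, u (n + 1)| ≤ ∑ n ∈ range N, (b n - b (n + 1)) :=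
        (abs_sum_le_sum_abs _ _).trans (sum_le_sum fun n _ => hub n)
    _ ≤ b 0 := by rw [sum_range_sub']; linarith [hb N]

theorem sum_Icc_sum_sq_dvd_div (m : ℕ → ℝ) (x : ℝ) :
    ∑ n ∈ Icc 1 ⌊x⌋₊, (∑ d ∈ n.divisors with d ^ 2 ∣ n, m d) / n =
      ∑ d ∈ Icc 1 ⌊x⌋₊, m d / (d : ℝ) ^ 2 * harmonic ⌊x / (d : ℝ) ^ 2⌋₊ := by
  have hfilter : ∀ n : ℕ, (∑ d ∈ n.divisors with d ^ 2 ∣ n, m d) / n =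
      ∑ d ∈ n.divisors, if d ^ 2 ∣ n then m d / n else 0 := fun n => by
    rw [sum_div, sum_filter]
  simp_rw [hfilter, sum_Icc_sum_divisors]
  refine sum_congr rfl fun d hd => ?_
  have hd : 0 < d := (mem_Icc.mp hd).1
  have hdvd : ∀ n, d ∣ n ∧ d ^ 2 ∣ n ↔ d ^ 2 ∣ n := fun n =>
    and_iff_right_of_imp (dvd_trans (dvd_pow_self d two_ne_zero))
  simp_rw [← sum_filter, filter_filter, hdvd, sum_Icc_filter_dvd x (pow_pos hd 2)]
  rw [harmonic_eq_sum_Icc, Rat.cast_sum, mul_sum, Nat.cast_pow]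
  refine sum_congr rfl fun j _ => ?_
  push_cast
  rw [div_mul_eq_div_div, div_eq_mul_inv _ (j : ℝ)]

theorem hasSum_mul_harmonic_floor_div_sq (m : ℕ → ℝ) {x : ℝ} (hx : 0 < x) :
    HasSum (fun d : ℕ => m d / (d : ℝ) ^ 2 * (harmonic ⌊x / (d : ℝ) ^ 2⌋₊ : ℝ))
      (∑ n ∈ Icc 1 ⌊x⌋₊, (∑ d ∈ n.divisors with d ^ 2 ∣ n, m d) / n) := by
  rw [sum_Icc_sum_sq_dvd_div]
  refine hasSum_sum_of_ne_finset_zero fun d hd => ?_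
  rcases d.eq_zero_or_pos with rfl | hd0
  · simp
  have hxd : x < d := (Nat.floor_lt hx.le).mp (by simpa [Nat.one_le_iff_ne_zero, hd0.ne'] using hd)
  have hd1 : (1 : ℝ) ≤ d := by exact_mod_cast hd0
  rw [Nat.floor_eq_zero.mpr, harmonic_zero, Rat.cast_zero, mul_zero]
  exact (div_lt_one (by positivity)).mpr (hxd.trans_le (le_self_pow₀ hd1 two_ne_zero))

theorem summable_sqrt_div_sq : Summable fun d : ℕ => √(d : ℝ) / (d : ℝ) ^ 2 := by
  refine (Real.summable_nat_rpow.mpr (show -(3 / 2 : ℝ) < -1 by norm_num)).congr fun d => ?_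
  rcases d.eq_zero_or_pos with rfl | hd
  · rw [Nat.cast_zero, Real.zero_rpow (by norm_num), Real.sqrt_zero, zero_div]
  · have hd : (0 : ℝ) < d := by exact_mod_cast hd
    rw [Real.sqrt_eq_rpow, ← Real.rpow_natCast, ← Real.rpow_sub hd]
    norm_num

theorem abs_mul_harmonic_floor_div_sq_sub_le {c x : ℝ} (hc : |c| ≤ 1) (hx : 0 < x) (d : ℕ) :
    |c / ((d + 1 : ℕ) : ℝ) ^ 2 * (harmonic ⌊x / ((d + 1 : ℕ) : ℝ) ^ 2⌋₊ -
      Real.log (x / ((d + 1 : ℕ) : ℝ) ^ 2) - Real.eulerMascheroniConstant)| ≤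
      32 / √(√x) * (1 / √(√x + d)) - 32 / √(√x) * (1 / √(√x + (d + 1 : ℕ))) := by
  have hz : 0 < √x := Real.sqrt_pos.mpr hx
  have hD : (0 : ℝ) < ((d + 1 : ℕ) : ℝ) := by positivity
  have htele := one_div_mul_sqrt_le_sub (show 0 < √x + d by positivity)
  rw [add_assoc, ← Nat.cast_succ, Nat.succ_eq_add_one] at htele
  set D : ℝ := ((d + 1 : ℕ) : ℝ)
  have hE := abs_harmonic_floor_inv_sq_le (t := D / √x) (by positivity)
  rw [div_pow, Real.sq_sqrt hx.le, one_div_div] at hE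
  have hsplit : 1 + D / √x = (√x + D) / √x := by field_simp
  rw [abs_mul, abs_div, abs_of_pos (pow_pos hD 2)]
  calc _ ≤ 1 / D ^ 2 * (16 * (D ^ 2 / x) / ((1 + D / √x) * √(1 + D / √x))) := by gcongr
    _ = 16 / √(√x) * (1 / ((√x + D) * √(√x + D))) := by
      have : 0 < √√x := Real.sqrt_pos.mpr hz
      rw [hsplit, Real.sqrt_div (by positivity)]
      field_simp
      rw [Real.sq_sqrt hz.le, Real.mul_self_sqrt hx.le]
    _ ≤ 16 / √(√x) * (2 / √(√x + d) - 2 / √(√x + D)) := by gcongr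
    _ = _ := by ring

-- A termwise bound through `1 / √(x / d ^ 2)` would cost a factor `log x`.
theorem hasLogExpansion_sum_sq_dvd_div {m : ℕ → ℝ} (hm : ∀ d, |m d| ≤ 1) :
    HasLogExpansion (fun n => (∑ d ∈ n.divisors with d ^ 2 ∣ n, m d) / n)
      (∑' d : ℕ, m d / (d : ℝ) ^ 2)
      (∑' d : ℕ, m d / (d : ℝ) ^ 2 * (Real.eulerMascheroniConstant - 2 * Real.log d)) 32 := by
  have summable_α : Summable fun d : ℕ => m d / (d : ℝ) ^ 2 := by
    refine .of_norm_bounded (Real.summable_one_div_nat_pow.mpr one_lt_two) fun d => ?_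
    rw [norm_div, norm_pow, Real.norm_natCast]
    gcongr
    exact hm d
  have summable_log : Summable fun d : ℕ => m d / (d : ℝ) ^ 2 * Real.log d := by
    refine .of_norm_bounded (summable_sqrt_div_sq.mul_left 2) fun d => ?_
    rw [norm_mul, norm_div, norm_pow, Real.norm_natCast, Real.norm_eq_abs, Real.norm_eq_abs,
      abs_of_nonneg (Real.log_natCast_nonneg d)]
    calc |m d| / (d : ℝ) ^ 2 * Real.log d ≤ 1 / (d : ℝ) ^ 2 * (2 * √d) := by
          gcongr
          · exact hm d
          · exact log_le_two_mul_sqrt d.cast_nonneg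
      _ = 2 * (√d / (d : ℝ) ^ 2) := by ring
  have summable_β : Summable fun d : ℕ =>
      m d / (d : ℝ) ^ 2 * (Real.eulerMascheroniConstant - 2 * Real.log d) :=
    ((summable_α.mul_right Real.eulerMascheroniConstant).sub (summable_log.mul_right 2)).congr
      fun d => by ring
  intro x hx
  have hsum := ((hasSum_mul_harmonic_floor_div_sq m hx).sub
    (summable_α.hasSum.mul_right (Real.log x))).sub summable_β.hasSum
  refine (abs_le_of_hasSum_of_abs_succ_le_sub (b := fun d => 32 / √(√x) * (1 / √(√x + d))) hsum
    (by simp) (fun d => by positivity) fun d => ?_).trans_eq ?_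
  · refine le_of_eq_of_le (congrArg abs ?_) (abs_mul_harmonic_floor_div_sq_sub_le (hm (d + 1)) hx d)
    rw [Real.log_div hx.ne' (by positivity), Real.log_pow, Nat.cast_two]
    ring
  · rw [Nat.cast_zero, add_zero, div_mul_div_comm, mul_one, Real.mul_self_sqrt (Real.sqrt_nonneg x)]

/-! ### Multiplicative functions supported on squarefree integers -/

theorem summable_prod_primeFactors_of_squarefree {r : ℕ → ℝ} (hr0 : ∀ p, 0 ≤ r p)
    (hr : Summable r) :
    Summable fun n : ℕ => if Squarefree n then ∏ p ∈ n.primeFactors, r p else 0 := by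
  have hinj : Function.Injective fun n : {n : ℕ // Squarefree n} => (n : ℕ).primeFactors :=
    fun m n hmn => Subtype.ext <| by
      rw [← Nat.prod_primeFactors_of_squarefree m.2, ← Nat.prod_primeFactors_of_squarefree n.2]
      exact prod_congr hmn fun _ _ => rfl
  have hprod := summable_finsetProd_of_summable_nonneg hr0 hr
  have hsub := hprod.comp_injective hinj
  have hind := (summable_subtype_iff_indicator (s := {n : ℕ | Squarefree n})
    (f := fun n : ℕ => ∏ p ∈ n.primeFactors, r p)).mp hsub
  refine hind.congr fun n => ?_
  simp only [Set.indicator_apply, Set.mem_ofPred_eq]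

/-- A function with `f (m * n) = f m * f n` for coprime `m`, `n` that vanishes off the squarefree
integers; it is determined by its values at primes. -/
structure IsSquarefreeMultiplicative (f : ℕ → ℝ) : Prop where
  map_one : f 1 = 1
  map_mul_of_coprime : ∀ {m n : ℕ}, m.Coprime n → f (m * n) = f m * f n
  map_of_not_squarefree : ∀ {n : ℕ}, ¬Squarefree n → f n = 0

namespace IsSquarefreeMultiplicative

variable {f : ℕ → ℝ}

theorem mul (hf : IsSquarefreeMultiplicative f) {h : ℕ → ℝ} (h_one : h 1 = 1)
    (h_mul : ∀ {m n : ℕ}, m.Coprime n → h (m * n) = h m * h n) :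
    IsSquarefreeMultiplicative fun n => f n * h n where
  map_one := by rw [hf.map_one, h_one, one_mul]
  map_mul_of_coprime hmn := by rw [hf.map_mul_of_coprime hmn, h_mul hmn, mul_mul_mul_comm]
  map_of_not_squarefree hn := by rw [hf.map_of_not_squarefree hn, zero_mul]

theorem eq_prod_primeFactors (hf : IsSquarefreeMultiplicative f) {n : ℕ} (hn : Squarefree n) :
    f n = ∏ p ∈ n.primeFactors, f p := by
  rw [Nat.multiplicative_factorization f (fun _ _ => hf.map_mul_of_coprime) hf.map_one hn.ne_zero,
    Finsupp.prod, Nat.support_factorization]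
  refine prod_congr rfl fun p hp => ?_
  have hfac : n.factorization p = 1 := (hn.natFactorization_le_one p).antisymm
    ((Nat.prime_of_mem_primeFactors hp).factorization_pos_of_dvd hn.ne_zero
      (Nat.dvd_of_mem_primeFactors hp))
  rw [hfac, pow_one]

theorem summable_norm (hf : IsSquarefreeMultiplicative f)
    (hsum : Summable fun p : Nat.Primes => ‖f p‖) : Summable fun n => ‖f n‖ := by
  set r : ℕ → ℝ := Set.indicator {p | p.Prime} fun p => ‖f p‖
  have hr : Summable r := summable_subtype_iff_indicator.mp hsum
  refine (summable_prod_primeFactors_of_squarefree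
    (Set.indicator_nonneg fun _ _ => norm_nonneg _) hr).congr fun n => ?_
  split_ifs with hn
  · rw [hf.eq_prod_primeFactors hn, norm_prod]
    exact prod_congr rfl fun p hp => Set.indicator_of_mem (Nat.prime_of_mem_primeFactors hp) _
  · rw [hf.map_of_not_squarefree hn, norm_zero]

theorem hasProd_one_add (hf : IsSquarefreeMultiplicative f)
    (hsum : Summable fun p : Nat.Primes => ‖f p‖) :
    HasProd (fun p : Nat.Primes => 1 + f p) (∑' n, f n) := by
  have h := EulerProduct.eulerProduct_hasProd hf.map_one hf.map_mul_of_coprime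
    (hf.summable_norm hsum) (hf.map_of_not_squarefree not_squarefree_zero)
  have hpow : ∀ p : Nat.Primes, ∑' e, f ((p : ℕ) ^ e) = 1 + f p := fun p => by
    have hzero : ∀ e ∉ range 2, f ((p : ℕ) ^ e) = 0 := fun e he => hf.map_of_not_squarefree <| by
      rw [mem_range, not_lt] at he
      exact fun hsq => p.2.prime.not_isUnit (hsq p (by rw [← pow_two]; exact pow_dvd_pow _ he))
    rw [tsum_eq_sum hzero, sum_range_succ, sum_range_one, pow_zero, pow_one, hf.map_one]
  simp_rw [hpow] at h
  exact h

end IsSquarefreeMultiplicative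

/-- The indicator function of the squarefree integers coprime to `k`, that is, `n ↦ μ²(n)`
restricted to `gcd(n, k) = 1`. -/
noncomputable def sqfreeCoprime (k n : ℕ) : ℝ :=
  if Squarefree n ∧ n.Coprime k then 1 else 0

theorem sqfreeCoprime_nonneg (k n : ℕ) : 0 ≤ sqfreeCoprime k n := by
  rw [sqfreeCoprime]
  split_ifs <;> norm_num

theorem sqfreeCoprime_le_one (k n : ℕ) : sqfreeCoprime k n ≤ 1 := by
  rw [sqfreeCoprime]
  split_ifs <;> norm_num

theorem sqfreeCoprime_prime (k : ℕ) {p : ℕ} (hp : p.Prime) :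
    sqfreeCoprime k p = if p ∣ k then 0 else 1 := by
  simp only [sqfreeCoprime, hp.prime.squarefree, hp.coprime_iff_not_dvd, true_and, ite_not]

theorem moebius_sq_eq_sqfreeCoprime {k n : ℕ} (h : n.gcd k = 1) :
    (moebius n : ℝ) ^ 2 = sqfreeCoprime k n := by
  rw [← Int.cast_pow, moebius_sq, sqfreeCoprime]
  simp only [Nat.Coprime, h, and_true, Int.cast_ite, Int.cast_one, Int.cast_zero]

theorem sqfreeCoprime_mul (k a b : ℕ) :
    sqfreeCoprime k (a * b) = sqfreeCoprime k a * sqfreeCoprime (a * k) b := by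
  have h : Squarefree (a * b) ∧ (a * b).Coprime k ↔
      (Squarefree a ∧ a.Coprime k) ∧ Squarefree b ∧ b.Coprime (a * k) := by
    rw [Nat.squarefree_mul_iff, Nat.coprime_mul_iff_left, Nat.coprime_mul_iff_right,
      Nat.coprime_comm (m := b) (n := a)]
    tauto
  simp only [sqfreeCoprime, h, ite_and, mul_ite, mul_one, mul_zero]
  split_ifs <;> rfl

theorem isSquarefreeMultiplicative_sqfreeCoprime (k : ℕ) :
    IsSquarefreeMultiplicative (sqfreeCoprime k) where
  map_one := if_pos ⟨squarefree_one, Nat.coprime_one_left k⟩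
  map_mul_of_coprime {m n} hmn := by
    have h : n.Coprime (m * k) ↔ n.Coprime k :=
      Nat.coprime_mul_iff_right.trans (and_iff_right hmn.symm)
    rw [sqfreeCoprime_mul]
    simp only [sqfreeCoprime, h]
  map_of_not_squarefree hn := if_neg fun h => hn h.1

theorem sqfreeCoprime_zero (k : ℕ) : sqfreeCoprime k 0 = 0 :=
  (isSquarefreeMultiplicative_sqfreeCoprime k).map_of_not_squarefree not_squarefree_zero

theorem wGY_mul_of_coprime {m n : ℕ} (h : m.Coprime n) : wGY (m * n) = wGY m * wGY n := by
  rw [wGY, h.primeFactors_mul, prod_union h.disjoint_primeFactors, wGY, wGY]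

theorem wGY_pos (k : ℕ) : 0 < wGY k := prod_pos fun p _ => by positivity

theorem sum_divisors_abs_moebius_div_sqrt {k : ℕ} (hk : 0 < k) :
    ∑ e ∈ k.divisors, |(moebius e : ℝ)| / √e = wGY k := by
  have h := Nat.sum_divisors_filter_squarefree hk.ne' (f := fun e : ℕ => 1 / √(e : ℝ))
  rw [Nat.factors_eq, sum_filter] at h
  have habs : ∀ e : ℕ, |(moebius e : ℝ)| / √e = if Squarefree e then 1 / √e else 0 := fun e => by
    rw [← Int.cast_abs, abs_moebius, Int.cast_ite, Int.cast_one, Int.cast_zero, ite_div, zero_div]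
  simp_rw [habs, h, wGY, prod_one_add]
  refine sum_congr rfl fun t _ => ?_
  rw [prod_val, Nat.cast_prod, Real.sqrt_prod _ fun i _ => by positivity, prod_div_distrib,
    prod_const_one]
  simp only [id_eq]

theorem summable_sqfreeCoprime_mul_wGY_div :
    Summable fun a : ℕ => sqfreeCoprime 1 a * (wGY a / (√a * a.totient)) := by
  have hmul : IsSquarefreeMultiplicative
      fun a : ℕ => sqfreeCoprime 1 a * (wGY a / (√a * a.totient)) :=
    (isSquarefreeMultiplicative_sqfreeCoprime 1).mul (by simp [wGY]) fun {m n} hmn => by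
      rw [wGY_mul_of_coprime hmn, Nat.totient_mul hmn, Nat.cast_mul, Nat.cast_mul,
        Real.sqrt_mul m.cast_nonneg]
      ring
  refine .of_norm (hmul.summable_norm ?_)
  have hrpow : Summable fun p : Nat.Primes => 4 * (p : ℝ) ^ (-(3 / 2) : ℝ) :=
    (Nat.Primes.summable_rpow.mpr (by norm_num)).mul_left 4
  refine .of_nonneg_of_le (fun p => norm_nonneg _) (fun p => ?_) hrpow
  have hp : (2 : ℝ) ≤ p := by exact_mod_cast p.2.two_le
  have hw : wGY p ≤ 2 := by
    rw [wGY, p.2.primeFactors, prod_singleton]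
    have : 1 / √(p : ℝ) ≤ 1 :=
      div_le_one_of_le₀ (Real.one_le_sqrt.mpr (by linarith)) (by positivity)
    linarith
  have htot : (p : ℝ) / 2 ≤ (p : ℕ).totient := by
    rw [Nat.totient_prime p.2, Nat.cast_pred p.2.pos]; linarith
  have hw0 := wGY_pos p
  rw [norm_mul, Real.norm_of_nonneg (sqfreeCoprime_nonneg 1 p), Real.norm_of_nonneg (by positivity)]
  calc _ ≤ 1 * (2 / (√p * (p / 2))) := by
        gcongr
        exact sqfreeCoprime_le_one 1 p
    _ = 4 * (p : ℝ) ^ (-(3 / 2) : ℝ) := by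
        rw [Real.rpow_neg (by positivity), show (3 / 2 : ℝ) = 1 / 2 + 1 by norm_num,
          Real.rpow_add_one (by positivity), ← Real.sqrt_eq_rpow]
        field_simp
        norm_num

/-! ### Convolution identities -/

theorem dvd_of_sq_dvd_sq_mul {d a b : ℕ} (hb : b ≠ 0) (ha : Squarefree a)
    (h : d ^ 2 ∣ b ^ 2 * a) : d ∣ b := by
  obtain ⟨g, d', b', hg, hcop, rfl, rfl⟩ := Nat.exists_coprime' (m := d) (n := b)
    (Nat.gcd_pos_of_pos_right d (Nat.pos_of_ne_zero hb))
  rw [mul_pow, mul_pow, mul_right_comm] at h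
  have hdvd : d' ^ 2 ∣ a := (hcop.pow 2 2).dvd_of_dvd_mul_left
    (Nat.dvd_of_mul_dvd_mul_right (by positivity) h)
  have hone : d' = 1 := Nat.isUnit_iff.mp (ha d' (by rwa [← pow_two]))
  rw [hone, one_mul]
  exact dvd_mul_left _ _

theorem sum_divisors_moebius (n : ℕ) :
    ∑ d ∈ n.divisors, (moebius d : ℝ) = if n = 1 then 1 else 0 := by
  rw [← Int.cast_sum, ← coe_mul_zeta_apply, moebius_mul_coe_zeta, one_apply, Int.cast_ite,
    Int.cast_one, Int.cast_zero]

theorem sum_sq_dvd_moebius {n : ℕ} (hn : n ≠ 0) :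
    ∑ d ∈ n.divisors with d ^ 2 ∣ n, (moebius d : ℝ) = if Squarefree n then 1 else 0 := by
  obtain ⟨a, b, rfl, ha⟩ := Nat.sq_mul_squarefree n
  have hb : b ≠ 0 := fun h => hn (by rw [h, zero_pow two_ne_zero, zero_mul])
  have hdiv : {d ∈ (b ^ 2 * a).divisors | d ^ 2 ∣ b ^ 2 * a} = b.divisors := by
    ext d
    rw [mem_filter, Nat.mem_divisors, Nat.mem_divisors]
    refine ⟨fun h => ⟨dvd_of_sq_dvd_sq_mul hb ha h.2, hb⟩, fun h => ?_⟩
    have hsq : d ^ 2 ∣ b ^ 2 * a := (pow_dvd_pow_of_dvd h.1 2).mul_right a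
    exact ⟨⟨(dvd_pow_self d two_ne_zero).trans hsq, hn⟩, hsq⟩
  have hsqf : Squarefree (b ^ 2 * a) ↔ b = 1 := by
    refine ⟨fun h => Nat.isUnit_iff.mp (h b ?_), fun h => ?_⟩
    · rw [← pow_two]
      exact dvd_mul_right _ _
    · rwa [h, one_pow, one_mul]
  rw [hdiv, sum_divisors_moebius]
  simp only [hsqf]

/-- The Möbius function restricted to the integers coprime to `k`. -/
noncomputable def moebiusCoprime (k d : ℕ) : ℝ := if d.Coprime k then (moebius d : ℝ) else 0

theorem abs_moebiusCoprime_le_one (k d : ℕ) : |moebiusCoprime k d| ≤ 1 := by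
  rw [moebiusCoprime]
  split_ifs
  · exact_mod_cast abs_moebius_le_one
  · norm_num

theorem sum_sq_dvd_moebiusCoprime_div {k e n : ℕ} (hn : n ≠ 0) (hek : e ∣ k) (hen : e ∣ n) :
    ∑ d ∈ (n / e).divisors with d ^ 2 ∣ n / e, moebiusCoprime k d =
      ∑ d ∈ n.divisors with d ^ 2 ∣ n, moebiusCoprime k d := by
  obtain ⟨m, rfl⟩ := hen
  rw [Nat.mul_div_cancel_left m (Nat.pos_of_ne_zero (left_ne_zero_of_mul hn))]
  refine sum_subset (fun d hd => ?_) fun d hd hd' => if_neg fun hdk => hd' ?_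
  · rw [mem_filter, Nat.mem_divisors] at hd ⊢
    exact ⟨⟨hd.1.1.mul_left e, hn⟩, hd.2.mul_left e⟩
  · have hsq : d ^ 2 ∣ m :=
      ((hdk.coprime_dvd_right hek).pow_left 2).dvd_of_dvd_mul_left (mem_filter.mp hd).2
    rw [mem_filter, Nat.mem_divisors]
    exact ⟨⟨(dvd_pow_self d two_ne_zero).trans hsq, right_ne_zero_of_mul hn⟩, hsq⟩

theorem sum_divisors_dvd_moebius {k n : ℕ} (hn : n ≠ 0) :
    ∑ e ∈ n.divisors with e ∣ k, (moebius e : ℝ) = if n.Coprime k then 1 else 0 := by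
  have hdiv : {e ∈ n.divisors | e ∣ k} = (n.gcd k).divisors := by
    ext e
    simp only [mem_filter, Nat.mem_divisors, Nat.dvd_gcd_iff, ne_eq, Nat.gcd_eq_zero_iff, hn,
      false_and, not_false_eq_true, and_true]
  rw [hdiv, sum_divisors_moebius]

theorem sqfreeCoprime_eq_mul_sum {k n : ℕ} (hn : n ≠ 0) :
    sqfreeCoprime k n =
      (if n.Coprime k then 1 else 0) * ∑ d ∈ n.divisors with d ^ 2 ∣ n, moebiusCoprime k d := by
  by_cases hnk : n.Coprime k
  · rw [sqfreeCoprime, if_congr (and_iff_left hnk) rfl rfl, if_pos hnk, one_mul,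
      ← sum_sq_dvd_moebius hn]
    refine sum_congr rfl fun d hd => (if_pos ?_).symm
    exact hnk.coprime_dvd_left (Nat.dvd_of_mem_divisors (mem_filter.mp hd).1)
  · rw [sqfreeCoprime, if_neg fun h => hnk h.2, if_neg hnk, zero_mul]

theorem sqfreeCoprime_div_eq_sum {k n : ℕ} (hn : n ≠ 0) :
    sqfreeCoprime k n / n = ∑ e ∈ n.divisors, (if e ∣ k then (moebius e : ℝ) / e else 0) *
      ((∑ d ∈ (n / e).divisors with d ^ 2 ∣ n / e, moebiusCoprime k d) / (n / e : ℕ)) := by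
  rw [sqfreeCoprime_eq_mul_sum hn, ← sum_divisors_dvd_moebius hn, sum_filter, sum_mul, sum_div]
  refine sum_congr rfl fun e he => ?_
  have hen := Nat.dvd_of_mem_divisors he
  have he0 : (e : ℝ) ≠ 0 := by exact_mod_cast (Nat.pos_of_mem_divisors he).ne'
  split_ifs with hek
  · rw [sum_sq_dvd_moebiusCoprime_div hn hek hen, Nat.cast_div hen he0]
    field_simp
  · simp only [zero_mul, zero_div]

theorem sum_divisors_one_div_totient {n : ℕ} (hn : Squarefree n) :
    ∑ a ∈ n.divisors, 1 / (a.totient : ℝ) = n / n.totient := by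
  have ht : (n.totient : ℝ) ≠ 0 := by
    exact_mod_cast (Nat.totient_pos.mpr (Nat.pos_of_ne_zero hn.ne_zero)).ne'
  have hsum : (n : ℝ) = ∑ a ∈ n.divisors, ((n / a).totient : ℝ) := by
    rw [← Nat.cast_sum, Nat.sum_div_divisors, Nat.sum_totient]
  rw [eq_div_iff ht, hsum, sum_mul]
  refine sum_congr rfl fun a ha => ?_
  obtain ⟨b, rfl⟩ := Nat.dvd_of_mem_divisors ha
  have ha0 := Nat.pos_of_mem_divisors ha
  have : (a.totient : ℝ) ≠ 0 := by exact_mod_cast (Nat.totient_pos.mpr ha0).ne'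
  rw [Nat.mul_div_cancel_left _ ha0, Nat.totient_mul (Nat.coprime_of_squarefree_mul hn),
    Nat.cast_mul, one_div, inv_mul_cancel_left₀ this]

theorem sqfreeCoprime_div_totient_eq_sum {k n : ℕ} (hn : n ≠ 0) :
    sqfreeCoprime k n / n.totient = ∑ a ∈ n.divisors,
      sqfreeCoprime k a / (a * a.totient) * (sqfreeCoprime (a * k) (n / a) / (n / a : ℕ)) := by
  have hterm : ∀ a ∈ n.divisors,
      sqfreeCoprime k a / (a * a.totient) * (sqfreeCoprime (a * k) (n / a) / (n / a : ℕ)) =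
        sqfreeCoprime k n / n * (1 / a.totient) := fun a ha => by
    obtain ⟨b, rfl⟩ := Nat.dvd_of_mem_divisors ha
    rw [Nat.mul_div_cancel_left _ (Nat.pos_of_mem_divisors ha), sqfreeCoprime_mul, Nat.cast_mul]
    ring
  rw [sum_congr rfl hterm, ← mul_sum]
  by_cases hsq : Squarefree n
  · have : (n : ℝ) ≠ 0 := by exact_mod_cast hn
    rw [sum_divisors_one_div_totient hsq]
    field_simp
  · rw [(isSquarefreeMultiplicative_sqfreeCoprime k).map_of_not_squarefree hsq]
    simp only [zero_div, zero_mul]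

theorem exists_hasLogExpansion_sqfreeCoprime_div {k : ℕ} (hk : 0 < k) :
    ∃ α β, HasLogExpansion (fun n => sqfreeCoprime k n / n) α β (32 * wGY k) := by
  set c : ℕ → ℝ := fun e => if e ∣ k then (moebius e : ℝ) / e else 0
  have hzero : ∀ e ∉ k.divisors, c e = 0 :=
    fun e he => if_neg fun h => he (Nat.mem_divisors.mpr ⟨h, hk.ne'⟩)
  have hterm : ∀ e ∈ k.divisors,
      |c e| * 32 * √e = 32 * (|(moebius e : ℝ)| / √e) :=
    fun e he => by
      have he0 : (0 : ℝ) < e := by exact_mod_cast Nat.pos_of_mem_divisors he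
      rw [show c e = (moebius e : ℝ) / e from if_pos (Nat.dvd_of_mem_divisors he), abs_div,
        abs_of_pos he0]
      field_simp
      rw [Real.sq_sqrt he0.le]
  have hzero' : ∀ e ∉ k.divisors, |c e| * 32 * √e = 0 := fun e he => by
    rw [hzero e he, abs_zero, zero_mul, zero_mul]
  have hconv := HasLogExpansion.convolution (c := c) (hzero 0 (by simp))
    (fun _ _ => hasLogExpansion_sum_sq_dvd_div (abs_moebiusCoprime_le_one k))
    (summable_of_ne_finset_zero hzero')
  rw [tsum_eq_sum hzero', sum_congr rfl hterm, ← mul_sum,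
    sum_divisors_abs_moebius_div_sqrt hk] at hconv
  exact ⟨_, _, hconv.congr fun n hn => (sqfreeCoprime_div_eq_sum hn.ne').symm⟩

theorem abs_sqfreeCoprime_div_mul_wGY_le (k a : ℕ) :
    |sqfreeCoprime k a / (a * a.totient)| * (32 * wGY (a * k)) * √a ≤
      32 * (sqfreeCoprime 1 a * (wGY a / (√a * a.totient))) * wGY k := by
  rcases a.eq_zero_or_pos with rfl | ha
  · simp
  have ha' : (0 : ℝ) < a := by exact_mod_cast ha
  have : (0 : ℝ) < a.totient := by exact_mod_cast Nat.totient_pos.mpr ha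
  by_cases h : Squarefree a ∧ a.Coprime k
  · rw [sqfreeCoprime, sqfreeCoprime, if_pos h, if_pos ⟨h.1, Nat.coprime_one_right a⟩,
      wGY_mul_of_coprime h.2, abs_of_pos (by positivity)]
    refine le_of_eq ?_
    field_simp
    rw [Real.sq_sqrt ha'.le]
    ring
  · have := sqfreeCoprime_nonneg 1 a
    have := wGY_pos a
    have := wGY_pos k
    rw [sqfreeCoprime, if_neg h, zero_div, abs_zero, zero_mul, zero_mul]
    positivity

theorem exists_hasLogExpansion_sqfreeCoprime_div_totient :
    ∃ A > 0, ∀ k > 0, ∃ α β,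
      HasLogExpansion (fun n => sqfreeCoprime k n / n.totient) α β (A * wGY k) := by
  set B : ℕ → ℝ := fun a => 32 * (sqfreeCoprime 1 a * (wGY a / (√a * a.totient)))
  have hB : Summable B := summable_sqfreeCoprime_mul_wGY_div.mul_left 32
  have hB0 : ∀ a, 0 ≤ B a := fun a => by
    have := sqfreeCoprime_nonneg 1 a
    have := wGY_pos a
    positivity
  refine ⟨∑' a, B a + 1, add_pos_of_nonneg_of_pos (tsum_nonneg hB0) one_pos, fun k hk => ?_⟩
  have hle : ∀ a : ℕ, _ ≤ B a * wGY k := abs_sqfreeCoprime_div_mul_wGY_le k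
  have hsum : Summable fun a : ℕ =>
      |sqfreeCoprime k a / (a * a.totient)| * (32 * wGY (a * k)) * √a :=
    .of_nonneg_of_le (fun a => by have := wGY_pos (a * k); positivity) hle (hB.mul_right _)
  choose! α β hαβ using fun a (ha : 0 < a) =>
    exists_hasLogExpansion_sqfreeCoprime_div (Nat.mul_pos ha hk)
  have hconv := HasLogExpansion.convolution
    (by rw [sqfreeCoprime_zero, zero_div]) hαβ hsum
  refine ⟨_, _, (hconv.congr fun n hn => (sqfreeCoprime_div_totient_eq_sum hn.ne').symm).mono ?_⟩
  calc _ ≤ ∑' a, B a * wGY k := hsum.tsum_le_tsum hle (hB.mul_right _)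
    _ = (∑' a, B a) * wGY k := tsum_mul_right
    _ ≤ _ := by
        have := wGY_pos k
        gcongr
        linarith

/-! ### Dirichlet series near `s = 0` -/

open MeasureTheory

theorem hasDerivAt_neg_rpow_mul_log_div_add {s t : ℝ} (hs : s ≠ 0) (ht : 0 < t) :
    HasDerivAt (fun t => -(t ^ (-s) * (Real.log t / s + 1 / s ^ 2)))
      (Real.log t * t ^ (-(s + 1))) t := by
  have hrpow := Real.hasDerivAt_rpow_const (p := -s) (Or.inl ht.ne')
  have hlog := ((Real.hasDerivAt_log ht.ne').div_const s).add_const (1 / s ^ 2)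
  refine (hrpow.mul hlog).neg.congr_deriv ?_
  have hpow : t ^ (-s) = t ^ (-s - 1) * t := by
    rw [← Real.rpow_add_one ht.ne', sub_add_cancel]
  rw [hpow, show -(s + 1) = -s - 1 by ring]
  field_simp
  ring

theorem tendsto_neg_rpow_mul_log_div_add {s : ℝ} (hs : 0 < s) :
    Tendsto (fun t : ℝ => -(t ^ (-s) * (Real.log t / s + 1 / s ^ 2))) atTop (𝓝 0) := by
  have hlog : Tendsto (fun t : ℝ => t ^ (-s) * Real.log t) atTop (𝓝 0) := by
    refine (isLittleO_log_rpow_atTop hs).tendsto_div_nhds_zero.congr' ?_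
    filter_upwards [eventually_ge_atTop 0] with t ht
    rw [Real.rpow_neg ht, div_eq_inv_mul]
  have h := ((hlog.div_const s).add ((tendsto_rpow_neg_atTop hs).mul_const (1 / s ^ 2))).neg
  simp only [zero_div, zero_mul, add_zero, neg_zero] at h
  exact h.congr fun t => by ring

theorem integrableOn_log_mul_rpow {s : ℝ} (hs : 0 < s) :
    IntegrableOn (fun t => Real.log t * t ^ (-(s + 1))) (Set.Ioi 1) :=
  integrableOn_Ioi_deriv_of_nonneg'
    (fun _ ht => hasDerivAt_neg_rpow_mul_log_div_add hs.ne' (zero_lt_one.trans_le ht))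
    (fun _ ht => mul_nonneg (Real.log_nonneg (le_of_lt ht))
      (Real.rpow_nonneg (zero_le_one.trans (le_of_lt ht)) _))
    (tendsto_neg_rpow_mul_log_div_add hs)

theorem integral_log_mul_rpow {s : ℝ} (hs : 0 < s) :
    ∫ t in Set.Ioi 1, Real.log t * t ^ (-(s + 1)) = 1 / s ^ 2 := by
  rw [integral_Ioi_of_hasDerivAt_of_tendsto'
    (fun _ ht => hasDerivAt_neg_rpow_mul_log_div_add hs.ne' (zero_lt_one.trans_le ht))
    (integrableOn_log_mul_rpow hs) (tendsto_neg_rpow_mul_log_div_add hs)]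
  simp

theorem integral_rpow_neg_add_one {s : ℝ} (hs : 0 < s) :
    ∫ t in Set.Ioi (1 : ℝ), t ^ (-(s + 1)) = 1 / s := by
  rw [integral_Ioi_rpow_of_lt (by linarith) one_pos, Real.one_rpow, neg_add, neg_add_cancel_right,
    neg_div_neg_eq]

theorem tsum_mul_rpow_neg_eq_mul_integral {u : ℕ → ℝ} (hu : ∀ n, 0 ≤ u n) {r s : ℝ} (hr : 0 ≤ r)
    (hs : r < s) (hO : (fun n => ∑ k ∈ Icc 1 n, u k) =O[atTop] fun n : ℕ => (n : ℝ) ^ r) :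
    ∑' n, u n * (n : ℝ) ^ (-s) =
      s * ∫ t in Set.Ioi 1, (∑ n ∈ Icc 1 ⌊t⌋₊, u n) * t ^ (-(s + 1)) := by
  have hL : LSeries (fun n => (u n : ℂ)) s = ((∑' n, u n * (n : ℝ) ^ (-s) : ℝ) : ℂ) := by
    rw [LSeries, Complex.ofReal_tsum]
    refine tsum_congr fun n => ?_
    rcases n.eq_zero_or_pos with rfl | hn
    · simp [Real.zero_rpow (neg_ne_zero.mpr (hr.trans_lt hs).ne')]
    · rw [LSeries.term_of_ne_zero hn.ne', Real.rpow_neg n.cast_nonneg, ← div_eq_mul_inv,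
        Complex.ofReal_div, Complex.ofReal_cpow n.cast_nonneg, Complex.ofReal_natCast]
  have hint : ∫ t in Set.Ioi (1 : ℝ), (∑ n ∈ Icc 1 ⌊t⌋₊, (u n : ℂ)) * (t : ℂ) ^ (-((s : ℂ) + 1)) =
      ((∫ t in Set.Ioi (1 : ℝ), (∑ n ∈ Icc 1 ⌊t⌋₊, u n) * t ^ (-(s + 1)) : ℝ) : ℂ) := by
    rw [← integral_complex_ofReal]
    refine setIntegral_congr_fun measurableSet_Ioi fun t ht => ?_
    rw [Complex.ofReal_mul, Complex.ofReal_sum,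
      Complex.ofReal_cpow (zero_le_one.trans (le_of_lt ht))]
    push_cast
    rfl
  have h := LSeries_eq_mul_integral_of_nonneg u hr (s := s) hs hO hu
  rw [hL, hint] at h
  exact_mod_cast h

namespace HasLogExpansion

variable {u : ℕ → ℝ} {α β W : ℝ}

theorem isBigO_rpow (hu : HasLogExpansion u α β W) {r : ℝ} (hr : 0 < r) :
    (fun n => ∑ k ∈ Icc 1 n, u k) =O[atTop] fun n : ℕ => (n : ℝ) ^ r := by
  have hone : (fun _ : ℝ => (1 : ℝ)) =O[atTop] fun x : ℝ => x ^ r :=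
    (Asymptotics.isLittleO_const_left.mpr <| Or.inr <|
      tendsto_norm_atTop_atTop.comp (tendsto_rpow_atTop hr)).isBigO
  have hlog : Real.log =O[atTop] fun x : ℝ => x ^ r := (isLittleO_log_rpow_atTop hr).isBigO
  have hrem : (fun x : ℝ => ∑ k ∈ Icc 1 ⌊x⌋₊, u k - α * Real.log x - β) =O[atTop]
      fun x : ℝ => x ^ r := by
    refine (Asymptotics.IsBigO.of_bound W ?_).trans hone
    filter_upwards [eventually_ge_atTop 1] with x hx
    have hW : 0 ≤ W := by simpa using (abs_nonneg _).trans (hu 1 one_pos)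
    rw [norm_one, mul_one]
    exact (hu x (by linarith)).trans (div_le_self hW (Real.one_le_sqrt.mpr hx))
  have hsum := (hrem.add (hlog.const_mul_left α)).add (hone.const_mul_left β)
  refine (hsum.comp_tendsto tendsto_natCast_atTop_atTop).congr_left fun n => ?_
  simp only [Function.comp_apply, Nat.floor_natCast]
  ring

theorem norm_remainder_mul_rpow_le (hu : HasLogExpansion u α β W) {s t : ℝ} (hs : 0 < s)
    (ht : 1 < t) :
    ‖(∑ n ∈ Icc 1 ⌊t⌋₊, u n - α * Real.log t - β) * t ^ (-(s + 1))‖ ≤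
      W * t ^ (-(3 / 2) : ℝ) := by
  have ht0 : 0 < t := by linarith
  rw [norm_mul, Real.norm_of_nonneg (Real.rpow_nonneg ht0.le _)]
  calc _ ≤ W / √t * t ^ (-1 : ℝ) := by
        gcongr
        · exact (abs_nonneg _).trans (hu t ht0)
        · exact hu t ht0
        · exact ht.le
        · linarith
    _ = W * t ^ (-(3 / 2) : ℝ) := by
        rw [Real.sqrt_eq_rpow, div_eq_mul_inv, ← Real.rpow_neg ht0.le, mul_assoc,
          ← Real.rpow_add ht0]
        norm_num

theorem integrableOn_remainder_mul_rpow (hu : HasLogExpansion u α β W) {s : ℝ} (hs : 0 < s) :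
    IntegrableOn (fun t => (∑ n ∈ Icc 1 ⌊t⌋₊, u n - α * Real.log t - β) * t ^ (-(s + 1)))
      (Set.Ioi 1) := by
  have hmeas : Measurable fun t : ℝ => ∑ n ∈ Icc 1 ⌊t⌋₊, u n :=
    (measurable_from_nat (f := fun N => ∑ n ∈ Icc 1 N, u n)).comp Nat.measurable_floor
  have hdom := (integrableOn_Ioi_rpow_of_lt (a := -(3 / 2)) (by norm_num) one_pos).const_mul W
  have hrpow : Measurable fun t : ℝ => t ^ (-(s + 1)) := by fun_prop
  refine hdom.mono' (((hmeas.sub (Real.measurable_log.const_mul α)).sub_const β).mul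
    hrpow).aestronglyMeasurable ?_
  filter_upwards [ae_restrict_mem measurableSet_Ioi] with t ht
  exact hu.norm_remainder_mul_rpow_le hs ht

theorem abs_integral_remainder_mul_rpow_le (hu : HasLogExpansion u α β W) {s : ℝ} (hs : 0 < s) :
    |∫ t in Set.Ioi 1, (∑ n ∈ Icc 1 ⌊t⌋₊, u n - α * Real.log t - β) * t ^ (-(s + 1))| ≤ 2 * W := by
  have hdom := (integrableOn_Ioi_rpow_of_lt (a := -(3 / 2)) (by norm_num) one_pos).const_mul W
  rw [← Real.norm_eq_abs]
  refine (norm_integral_le_of_norm_le hdom ?_).trans_eq ?_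
  · filter_upwards [ae_restrict_mem measurableSet_Ioi] with t ht
    exact hu.norm_remainder_mul_rpow_le hs ht
  · rw [integral_const_mul, integral_Ioi_rpow_of_lt (by norm_num) one_pos, Real.one_rpow]
    ring

-- As a Mellin transform of the partial sums, the series splits into the transform `α / s + β` of
-- the main term and a transform that remains bounded at `s = 0`.
theorem abs_tsum_mul_rpow_neg_sub_le (hu : HasLogExpansion u α β W) (hu0 : ∀ n, 0 ≤ u n) {s : ℝ}
    (hs : 0 < s) : |∑' n, u n * (n : ℝ) ^ (-s) - α / s - β| ≤ 2 * W * s := by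
  have hsplit : ∫ t in Set.Ioi 1, (∑ n ∈ Icc 1 ⌊t⌋₊, u n) * t ^ (-(s + 1)) =
      (∫ t in Set.Ioi 1, (∑ n ∈ Icc 1 ⌊t⌋₊, u n - α * Real.log t - β) * t ^ (-(s + 1))) +
        (α * (1 / s ^ 2) + β * (1 / s)) := by
    have hlog := (integrableOn_log_mul_rpow hs).const_mul α
    have hconst := (integrableOn_Ioi_rpow_of_lt (by linarith : -(s + 1) < -1) one_pos).const_mul β
    have hmain : IntegrableOn
        (fun t => α * (Real.log t * t ^ (-(s + 1))) + β * t ^ (-(s + 1))) (Set.Ioi 1) :=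
      hlog.add hconst
    rw [← integral_log_mul_rpow hs, ← integral_rpow_neg_add_one hs, ← integral_const_mul,
      ← integral_const_mul, ← integral_add hlog hconst,
      ← integral_add (hu.integrableOn_remainder_mul_rpow hs) hmain]
    refine integral_congr_ae (.of_forall fun t => ?_)
    ring
  have hmain : s * (α * (1 / s ^ 2) + β * (1 / s)) = α / s + β := by field_simp
  rw [tsum_mul_rpow_neg_eq_mul_integral hu0 (half_pos hs).le (half_lt_self hs)
    (hu.isBigO_rpow (half_pos hs)), hsplit, mul_add, hmain, sub_sub, add_sub_cancel_right, abs_mul,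
    abs_of_pos hs, mul_comm]
  gcongr
  exact hu.abs_integral_remainder_mul_rpow_le hs

theorem tendsto_tsum_mul_rpow_neg_sub_div (hu : HasLogExpansion u α β W) (hu0 : ∀ n, 0 ≤ u n) :
    Tendsto (fun s : ℝ => ∑' n, u n * (n : ℝ) ^ (-s) - α / s) (𝓝[>] 0) (𝓝 β) := by
  have hbound : Tendsto (fun s : ℝ => 2 * W * s) (𝓝[>] 0) (𝓝 0) :=
    ((continuous_const_mul (2 * W)).tendsto' 0 0 (mul_zero _)).mono_left nhdsWithin_le_nhds
  rw [tendsto_iff_norm_sub_tendsto_zero]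
  refine squeeze_zero' (.of_forall fun _ => norm_nonneg _) ?_ hbound
  filter_upwards [self_mem_nhdsWithin] with s hs
  exact hu.abs_tsum_mul_rpow_neg_sub_le hu0 hs

end HasLogExpansion

theorem eq_and_eq_of_tendsto_sub_div {F : ℝ → ℝ} {a a' b b' : ℝ}
    (h : Tendsto (fun s => F s - a / s) (𝓝[>] 0) (𝓝 b))
    (h' : Tendsto (fun s => F s - a' / s) (𝓝[>] 0) (𝓝 b')) : a = a' ∧ b = b' := by
  have hid : Tendsto (fun s : ℝ => s) (𝓝[>] 0) (𝓝 0) := tendsto_id.mono_left nhdsWithin_le_nhds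
  have hdiff : Tendsto (fun _ : ℝ => a - a') (𝓝[>] 0) (𝓝 (0 * b' - 0 * b)) := by
    refine ((hid.mul h').sub (hid.mul h)).congr' ?_
    filter_upwards [self_mem_nhdsWithin] with s (hs : 0 < s)
    field_simp
    ring
  have ha : a = a' := by
    have := tendsto_nhds_unique tendsto_const_nhds hdiff
    linarith
  exact ⟨ha, tendsto_nhds_unique h (ha ▸ h')⟩

/-! ### Euler products near `s = 0` -/

theorem one_add_sum_le_prod_one_add {ι : Type*} (t : Finset ι) {f : ι → ℝ} (hf : ∀ i, 0 ≤ f i) :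
    1 + ∑ i ∈ t, f i ≤ ∏ i ∈ t, (1 + f i) := by
  classical
  induction t using Finset.induction_on with
  | empty => simp
  | insert a t ha ih =>
    rw [sum_insert ha, prod_insert ha]
    nlinarith [hf a, sum_nonneg fun i (_ : i ∈ t) => hf i]

theorem tendsto_tprod_one_add_sub_one_div {ι : Type*} {ε : ℝ → ι → ℝ} {l : ι → ℝ} (hl : Summable l)
    (hε0 : ∀ s, 0 ≤ s → ∀ i, 0 ≤ ε s i) (hε : ∀ s, 0 ≤ s → ∀ i, ε s i ≤ s * l i)
    (hderiv : ∀ i, HasDerivAt (ε · i) (l i) 0) :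
    Tendsto (fun s => (∏' i, (1 + ε s i) - 1) / s) (𝓝[>] 0) (𝓝 (∑' i, l i)) := by
  have hsum : ∀ s, 0 ≤ s → Summable (ε s) := fun s hs =>
    .of_nonneg_of_le (hε0 s hs) (hε s hs) (hl.mul_left s)
  have hprod : ∀ s, 0 ≤ s → HasProd (fun i => 1 + ε s i) (∏' i, (1 + ε s i)) := fun s hs =>
    (Real.multipliable_one_add_of_summable (hsum s hs)).hasProd
  have hlower : Tendsto (fun s => (∑' i, ε s i) / s) (𝓝[>] 0) (𝓝 (∑' i, l i)) := by
    simp_rw [← tsum_div_const]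
    refine tendsto_tsum_of_dominated_convergence hl (fun i => ?_) ?_
    · have hzero : ε 0 i = 0 := le_antisymm (by simpa using hε 0 le_rfl i) (hε0 0 le_rfl i)
      refine (hderiv i).tendsto_slope_zero_right.congr fun s => ?_
      rw [zero_add, hzero, sub_zero, smul_eq_mul, inv_mul_eq_div]
    · filter_upwards [self_mem_nhdsWithin] with s (hs : 0 < s) i
      rw [Real.norm_of_nonneg (div_nonneg (hε0 s hs.le i) hs.le), div_le_iff₀' hs]
      exact hε s hs.le i
  have hupper : Tendsto (fun s => (Real.exp (s * ∑' i, l i) - 1) / s) (𝓝[>] 0)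
      (𝓝 (∑' i, l i)) := by
    have h := (hasDerivAt_mul_const (∑' i, l i) (x := 0)).exp.tendsto_slope_zero_right
    simpa [inv_mul_eq_div] using h
  refine tendsto_of_tendsto_of_tendsto_of_le_of_le' hlower hupper ?_ ?_ <;>
    filter_upwards [self_mem_nhdsWithin] with s (hs : 0 < s)
  · have h := le_of_tendsto_of_tendsto' ((hsum s hs.le).hasSum.const_add 1) (hprod s hs.le)
      fun t => one_add_sum_le_prod_one_add t (hε0 s hs.le)
    gcongr
    linarith
  · gcongr
    refine le_of_tendsto' (hprod s hs.le) fun t =>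
      (Real.prod_one_add_le_exp_sum t (hε0 s hs.le)).trans (Real.exp_le_exp.mpr ?_)
    calc ∑ i ∈ t, ε s i ≤ ∑' i, ε s i := (hsum s hs.le).sum_le_tsum t fun i _ => hε0 s hs.le i
      _ ≤ s * ∑' i, l i := by
          rw [← tsum_mul_left]
          exact (hsum s hs.le).tsum_le_tsum (hε s hs.le) (hl.mul_left s)

@[to_additive]
theorem hasProd_primes_ite_dvd {M : Type*} [CommMonoid M] [TopologicalSpace M] {k : ℕ} (hk : k ≠ 0)
    (g : ℕ → M) :
    HasProd (fun p : Nat.Primes => if (p : ℕ) ∣ k then g p else 1) (∏ p ∈ k.primeFactors, g p) := by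
  set f : ℕ → M := fun p => if p ∈ k.primeFactors then g p else 1
  have hf : HasProd f (∏ p ∈ k.primeFactors, f p) :=
    hasProd_prod_of_ne_finset_one fun p hp => if_neg hp
  rw [prod_congr rfl fun p hp => if_pos hp] at hf
  have hsupp : Function.mulSupport f ⊆ {p | p.Prime} := fun p hp => by
    by_contra hpp
    exact hp (if_neg fun hmem => hpp (Nat.prime_of_mem_primeFactors hmem))
  refine ((hasProd_subtype_iff_of_mulSupport_subset hsupp).mpr hf).congr_fun fun p => ?_
  have hmem : (p : ℕ) ∈ k.primeFactors ↔ (p : ℕ) ∣ k :=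
    ⟨Nat.dvd_of_mem_primeFactors, fun h => Nat.mem_primeFactors.mpr ⟨p.2, h, hk⟩⟩
  simp only [f, Function.comp_apply, hmem]

theorem hasProd_totient_div {k : ℕ} (hk : k ≠ 0) :
    HasProd (fun p : Nat.Primes => if (p : ℕ) ∣ k then 1 - (p : ℝ)⁻¹ else 1)
      ((k.totient : ℝ) / k) := by
  have h := congrArg (Rat.cast : ℚ → ℝ) (Nat.totient_eq_mul_prod_factors k)
  push_cast at h
  rw [h, mul_div_cancel_left₀ _ (Nat.cast_ne_zero.mpr hk)]
  exact hasProd_primes_ite_dvd hk fun p => 1 - (p : ℝ)⁻¹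

theorem hasLogExpansion_one_div :
    HasLogExpansion (fun n => 1 / (n : ℝ)) 1 Real.eulerMascheroniConstant 32 := by
  have h := hasLogExpansion_sum_sq_dvd_div (m := fun d => if d = 1 then 1 else 0) fun d => by
    split_ifs <;> norm_num
  rw [tsum_eq_single 1 (by simp +contextual), tsum_eq_single 1 (by simp +contextual)] at h
  simp only [if_true, Nat.cast_one, one_pow, div_one, Real.log_one, mul_zero, sub_zero,
    one_mul] at h
  refine h.congr fun n hn => ?_
  rw [sum_ite_eq', if_pos (mem_filter.mpr ⟨Nat.one_mem_divisors.mpr hn.ne', by simp⟩)]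

theorem hasProd_one_sub_rpow_inv {s : ℝ} (hs : 0 < s) :
    HasProd (fun p : Nat.Primes => (1 - 1 / (p : ℝ) * (p : ℝ) ^ (-s))⁻¹)
      (∑' n : ℕ, 1 / (n : ℝ) * (n : ℝ) ^ (-s)) := by
  let f : ℕ →*₀ ℝ :=
    { toFun := fun n => 1 / (n : ℝ) * (n : ℝ) ^ (-s)
      map_zero' := by simp
      map_one' := by simp
      map_mul' := fun m n => by
        rw [Nat.cast_mul, Real.mul_rpow m.cast_nonneg n.cast_nonneg]
        ring }
  have hpow : Summable fun n : ℕ => (n : ℝ) ^ (-1 + -s) := Real.summable_nat_rpow.mpr (by linarith)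
  have hf : Summable f := hpow.congr fun n => by
    rw [Real.rpow_add' n.cast_nonneg (by linarith), Real.rpow_neg_one, ← one_div]
    rfl
  exact EulerProduct.eulerProduct_completely_multiplicative_hasProd hf.norm

theorem hasProd_sqfreeCoprime_div_totient (k : ℕ) {s : ℝ} (hs : 0 < s) :
    HasProd (fun p : Nat.Primes => 1 + sqfreeCoprime k p / (p : ℕ).totient * (p : ℝ) ^ (-s))
      (∑' n : ℕ, sqfreeCoprime k n / n.totient * (n : ℝ) ^ (-s)) := by
  have hmul : IsSquarefreeMultiplicative
      fun n : ℕ => sqfreeCoprime k n / n.totient * (n : ℝ) ^ (-s) := by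
    simp_rw [div_mul_eq_mul_div, mul_div_assoc]
    refine (isSquarefreeMultiplicative_sqfreeCoprime k).mul (by simp) fun {m n} hmn => ?_
    rw [Nat.totient_mul hmn, Nat.cast_mul, Nat.cast_mul,
      Real.mul_rpow m.cast_nonneg n.cast_nonneg, mul_div_mul_comm]
  refine hmul.hasProd_one_add (.of_nonneg_of_le (fun p => norm_nonneg _) (fun p => ?_)
    ((Nat.Primes.summable_rpow.mpr (by linarith : -1 + -s < -1)).mul_left 2))
  have hp : (2 : ℝ) ≤ p := by exact_mod_cast p.2.two_le
  have htot : (p : ℝ) / 2 ≤ (p : ℕ).totient := by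
    rw [Nat.totient_prime p.2, Nat.cast_pred p.2.pos]
    linarith
  have := sqfreeCoprime_nonneg k p
  rw [Real.norm_of_nonneg (by positivity)]
  calc _ ≤ 1 / ((p : ℝ) / 2) * (p : ℝ) ^ (-s) := by
        gcongr
        exact sqfreeCoprime_le_one k p
    _ = 2 * (p : ℝ) ^ (-1 + -s) := by
        rw [Real.rpow_add (by linarith), Real.rpow_neg_one]
        ring

/-- The number `ε` for which the Euler factor at `p` of `∑ μ²(n) φ(n)⁻¹ n⁻ˢ`, summed over `n`
coprime to `k`, is that of `ζ(1 + s) φ(k) / k` times `1 + ε`. -/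
noncomputable def eulerCorrection (k : ℕ) (s : ℝ) (p : ℕ) : ℝ :=
  if p ∣ k then (1 - (p : ℝ) ^ (-s)) / (p - 1)
  else (p : ℝ) ^ (-s) * (1 - (p : ℝ) ^ (-s)) / (p * (p - 1))

/-- The derivative of `eulerCorrection k s p` in `s` at `s = 0`. -/
noncomputable def eulerCorrectionDeriv (k p : ℕ) : ℝ :=
  if p ∣ k then Real.log p / (p - 1) else Real.log p / (p * (p - 1))

theorem eulerFactor_eq_mul_one_add_eulerCorrection (k : ℕ) {s : ℝ} (hs : 0 < s) {p : ℕ}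
    (hp : p.Prime) :
    1 + sqfreeCoprime k p / p.totient * (p : ℝ) ^ (-s) =
      (1 - 1 / (p : ℝ) * (p : ℝ) ^ (-s))⁻¹ * (if p ∣ k then 1 - (p : ℝ)⁻¹ else 1) *
        (1 + eulerCorrection k s p) := by
  have hp1 : (1 : ℝ) < p := by exact_mod_cast hp.one_lt
  have hpow : (p : ℝ) ^ (-s) < 1 := Real.rpow_lt_one_of_one_lt_of_neg hp1 (neg_lt_zero.mpr hs)
  have hp0 : (p : ℝ) ≠ 0 := by linarith
  have hpred : (p : ℝ) - 1 ≠ 0 := by linarith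
  have hsub : (p : ℝ) - (p : ℝ) ^ (-s) ≠ 0 := by linarith
  have hfactor : 1 - 1 / (p : ℝ) * (p : ℝ) ^ (-s) = (p - (p : ℝ) ^ (-s)) / p := by field_simp
  rw [sqfreeCoprime_prime k hp, eulerCorrection, Nat.totient_prime hp, Nat.cast_pred hp.pos,
    hfactor]
  split_ifs
  all_goals
    field_simp
    ring

theorem eulerCorrection_nonneg (k : ℕ) {s : ℝ} (hs : 0 ≤ s) {p : ℕ} (hp : p.Prime) :
    0 ≤ eulerCorrection k s p := by
  have hp1 : (1 : ℝ) < p := by exact_mod_cast hp.one_lt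
  have hpow : 0 ≤ 1 - (p : ℝ) ^ (-s) :=
    sub_nonneg.mpr (Real.rpow_le_one_of_one_le_of_nonpos hp1.le (neg_nonpos.mpr hs))
  have : 0 < (p : ℝ) - 1 := by linarith
  rw [eulerCorrection]
  split_ifs <;> positivity

theorem eulerCorrection_le_mul (k : ℕ) {s : ℝ} (hs : 0 ≤ s) {p : ℕ} (hp : p.Prime) :
    eulerCorrection k s p ≤ s * eulerCorrectionDeriv k p := by
  have hp1 : (1 : ℝ) < p := by exact_mod_cast hp.one_lt
  have hpow : (p : ℝ) ^ (-s) ≤ 1 :=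
    Real.rpow_le_one_of_one_le_of_nonpos hp1.le (neg_nonpos.mpr hs)
  have hlog : 1 - (p : ℝ) ^ (-s) ≤ s * Real.log p := by
    have := Real.add_one_le_exp (Real.log p * -s)
    rw [Real.rpow_def_of_pos (by linarith)]
    linarith
  have : 0 < (p : ℝ) - 1 := by linarith
  rw [eulerCorrection, eulerCorrectionDeriv]
  split_ifs <;> rw [← mul_div_assoc]
  · gcongr
  · refine div_le_div_of_nonneg_right ?_ (by positivity)
    exact (mul_le_of_le_one_left (by linarith) hpow).trans hlog

theorem hasDerivAt_eulerCorrection_zero (k : ℕ) {p : ℕ} (hp : 0 < p) :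
    HasDerivAt (eulerCorrection k · p) (eulerCorrectionDeriv k p) 0 := by
  have hpow : HasDerivAt (fun s : ℝ => (p : ℝ) ^ (-s)) (-Real.log p) 0 := by
    refine ((hasDerivAt_neg (0 : ℝ)).const_rpow (Nat.cast_pos.mpr hp)).congr_deriv ?_
    rw [neg_zero, Real.rpow_zero]
    ring
  have hsub := hpow.const_sub 1
  simp only [eulerCorrection, eulerCorrectionDeriv]
  split_ifs
  · exact (hsub.div_const _).congr_deriv (by rw [neg_neg])
  · refine ((hpow.mul hsub).div_const _).congr_deriv ?_
    rw [neg_zero, Real.rpow_zero]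
    ring

theorem summable_log_div_mul_sub_one :
    Summable fun p : Nat.Primes => Real.log p / ((p : ℝ) * ((p : ℝ) - 1)) := by
  refine .of_nonneg_of_le (fun p => ?_) (fun p => ?_)
    ((summable_sqrt_div_sq.mul_left 4).comp_injective Nat.Primes.coe_nat_injective)
  all_goals have hp : (2 : ℝ) ≤ p := by exact_mod_cast p.2.two_le
  · have hpred : 0 ≤ (p : ℝ) - 1 := by linarith
    have := Real.log_natCast_nonneg p
    positivity
  · calc _ ≤ 2 * √(p : ℝ) / (p * (p / 2)) := by
          gcongr
          · exact log_le_two_mul_sqrt (by positivity)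
          · linarith
      _ = 4 * (√(p : ℝ) / (p : ℝ) ^ 2) := by
          field_simp
          norm_num

theorem hasSum_eulerCorrectionDeriv {k : ℕ} (hk : k ≠ 0) :
    HasSum (fun p : Nat.Primes => eulerCorrectionDeriv k p)
      (∑' p : Nat.Primes, Real.log p / ((p : ℝ) * ((p : ℝ) - 1)) + vGY k) := by
  refine (summable_log_div_mul_sub_one.hasSum.add
    (hasSum_primes_ite_dvd hk fun p => Real.log p / p)).congr_fun fun p => ?_
  have hp : (1 : ℝ) < p := by exact_mod_cast p.2.one_lt
  have hpred : (p : ℝ) - 1 ≠ 0 := by linarith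
  rw [eulerCorrectionDeriv]
  split_ifs
  · field_simp
    ring
  · rw [add_zero]

theorem tendsto_tprod_eulerCorrection_sub_one_div {k : ℕ} (hk : k ≠ 0) :
    Tendsto (fun s => (∏' p : Nat.Primes, (1 + eulerCorrection k s p) - 1) / s) (𝓝[>] 0)
      (𝓝 (∑' p : Nat.Primes, Real.log p / ((p : ℝ) * ((p : ℝ) - 1)) + vGY k)) := by
  have hl := hasSum_eulerCorrectionDeriv hk
  rw [← hl.tsum_eq]
  exact tendsto_tprod_one_add_sub_one_div hl.summable
    (fun s hs p => eulerCorrection_nonneg k hs p.2)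
    (fun s hs p => eulerCorrection_le_mul k hs p.2)
    fun p => hasDerivAt_eulerCorrection_zero k p.2.pos

theorem tsum_sqfreeCoprime_div_totient_eq {k : ℕ} (hk : k ≠ 0) {s : ℝ} (hs : 0 < s) :
    ∑' n : ℕ, sqfreeCoprime k n / n.totient * (n : ℝ) ^ (-s) =
      (∑' n : ℕ, 1 / (n : ℝ) * (n : ℝ) ^ (-s)) * (k.totient / k) *
        ∏' p : Nat.Primes, (1 + eulerCorrection k s p) := by
  have hsum : Summable fun p : Nat.Primes => eulerCorrection k s p :=
    .of_nonneg_of_le (fun p => eulerCorrection_nonneg k hs.le p.2)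
      (fun p => eulerCorrection_le_mul k hs.le p.2)
      ((hasSum_eulerCorrectionDeriv hk).summable.mul_left s)
  have hcorr := (Real.multipliable_one_add_of_summable hsum).hasProd
  refine (hasProd_sqfreeCoprime_div_totient k hs).unique
    ((((hasProd_one_sub_rpow_inv hs).mul (hasProd_totient_div hk)).mul hcorr).congr_fun fun p => ?_)
  exact eulerFactor_eq_mul_one_add_eulerCorrection k hs p.2

theorem tendsto_tsum_sqfreeCoprime_sub_div {k : ℕ} (hk : k ≠ 0) :
    Tendsto (fun s : ℝ => ∑' n : ℕ, sqfreeCoprime k n / n.totient * (n : ℝ) ^ (-s) -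
      (k.totient / k : ℝ) / s) (𝓝[>] 0) (𝓝 (k.totient / k * (cGY + vGY k))) := by
  set P : ℝ → ℝ := fun s => ∏' p : Nat.Primes, (1 + eulerCorrection k s p)
  have hzeta := hasLogExpansion_one_div.tendsto_tsum_mul_rpow_neg_sub_div fun n => by positivity
  have hderiv : Tendsto (fun s => (P s - 1) / s) (𝓝[>] 0) _ :=
    tendsto_tprod_eulerCorrection_sub_one_div hk
  have hid : Tendsto (fun s : ℝ => s) (𝓝[>] 0) (𝓝 0) := tendsto_id.mono_left nhdsWithin_le_nhds
  have hP : Tendsto P (𝓝[>] 0) (𝓝 1) := by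
    have h := (hid.mul hderiv).add_const 1
    rw [zero_mul, zero_add] at h
    refine h.congr' ?_
    filter_upwards [self_mem_nhdsWithin] with s (hs : 0 < s)
    field_simp
    ring
  have h := ((hzeta.mul hP).add hderiv).const_mul (k.totient / k : ℝ)
  rw [mul_one, ← add_assoc, ← cGY] at h
  refine h.congr' ?_
  filter_upwards [self_mem_nhdsWithin] with s (hs : 0 < s)
  rw [tsum_sqfreeCoprime_div_totient_eq hk hs]
  ring

theorem lemma3_hildebrand :
    ∃ A : ℝ, 0 < A ∧ ∀ (k : ℕ) (R : ℝ), 1 ≤ k → 1 ≤ R →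
      |(∑ n ∈ (Finset.Icc 1 ⌊R⌋₊).filter (fun n => Nat.gcd n k = 1),
          (ArithmeticFunction.moebius n : ℝ) ^ 2 / (n.totient : ℝ))
        - ((k.totient : ℝ) / (k : ℝ)) * (Real.log R + cGY + vGY k)|
      ≤ A * wGY k / Real.sqrt R := by
  obtain ⟨A, hA, hexpansion⟩ := exists_hasLogExpansion_sqfreeCoprime_div_totient
  refine ⟨A, hA, fun k R hk hR => ?_⟩
  obtain ⟨α, β, hαβ⟩ := hexpansion k hk
  obtain ⟨rfl, rfl⟩ := eq_and_eq_of_tendsto_sub_div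
    (hαβ.tendsto_tsum_mul_rpow_neg_sub_div fun n =>
      div_nonneg (sqfreeCoprime_nonneg k n) n.totient.cast_nonneg)
    (tendsto_tsum_sqfreeCoprime_sub_div (Nat.pos_iff_ne_zero.mp hk))
  have hsum : ∑ n ∈ Icc 1 ⌊R⌋₊ with n.gcd k = 1, (moebius n : ℝ) ^ 2 / n.totient =
      ∑ n ∈ Icc 1 ⌊R⌋₊, sqfreeCoprime k n / n.totient := by
    rw [sum_filter]
    refine sum_congr rfl fun n _ => ?_
    split_ifs with hnk
    · rw [moebius_sq_eq_sqfreeCoprime hnk]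
    · rw [sqfreeCoprime, if_neg fun h => hnk h.2, zero_div]
  rw [hsum, add_assoc, mul_add, ← sub_sub]
  exact hαβ R (one_pos.trans_le hR)
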